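/- Let G = C_2^2 ⊕ G_p where G_p is a finite abelian p-group for an odd prime p. Then K(G) = K*(G). -/

import Mathlib

open Multiset Pointwise

/-- Cross number of a sequence (multiset) over an additive group. -/
noncomputable def crossNum {G : Type*} [AddCommGroup G] (S : Multiset G) : ℚ :=
  (S.map (fun g => (1 : ℚ) / (addOrderOf g : ℚ))).sum

/-- A sequence is zero-sum free if no non-empty subsequence sums to zero. -/
def IsZeroSumFree {G : Type*} [AddCommGroup G] (S : Multiset G) : Prop :=
  ∀ T : Multiset G, T ≤ S → T ≠ 0 → T.sum ≠ (0 : G)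

/-- A minimal zero-sum sequence: non-trivial, sum zero, no proper non-trivial
zero-sum subsequence. -/
def IsMinZeroSum {G : Type*} [AddCommGroup G] (S : Multiset G) : Prop :=
  S ≠ 0 ∧ S.sum = 0 ∧ ∀ T : Multiset G, T < S → T ≠ 0 → T.sum ≠ (0 : G)

/-- `wSet G` : set of cross numbers of non-trivial zero-sum free sequences over `G`. -/
def wSet (G : Type*) [AddCommGroup G] : Set ℚ :=
  { k | ∃ S : Multiset G, S ≠ 0 ∧ IsZeroSumFree S ∧ crossNum S = k }

/-- `WSet G` : set of cross numbers of minimal zero-sum sequences over `G`. -/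
def WSet (G : Type*) [AddCommGroup G] : Set ℚ :=
  { k | ∃ S : Multiset G, IsMinZeroSum S ∧ crossNum S = k }

section PGroup

set_option linter.unusedSectionVars false

variable {p : ℕ} [Fact p.Prime] {H : Type*} [AddCommGroup H] {s : ℕ}

/-- `1 - X^g` in the group algebra. -/
noncomputable def oneSub (p : ℕ) {H : Type*} [AddCommGroup H] (g : H) :
    AddMonoidAlgebra (ZMod p) H :=
  1 - AddMonoidAlgebra.single g 1

/-- Weighted power filtration of the augmentation ideal. -/
noncomputable def filtr (p : ℕ) {H : Type*} [AddCommGroup H] {s : ℕ} (b : Fin s → H)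
    (c : Fin s → ℕ) (w : ℕ) : Ideal (AddMonoidAlgebra (ZMod p) H) :=
  Ideal.span {x | ∃ m : Fin s → ℕ, w ≤ ∑ i, m i * c i ∧ x = ∏ i, oneSub p (b i) ^ m i}

theorem filtr_mul (b : Fin s → H) (c : Fin s → ℕ) (v w : ℕ) {x y : AddMonoidAlgebra (ZMod p) H}
    (hx : x ∈ filtr p b c v) (hy : y ∈ filtr p b c w) : x * y ∈ filtr p b c (v + w) := by
  have h : x * y ∈ filtr p b c v * filtr p b c w := Ideal.mul_mem_mul hx hy
  unfold filtr at h
  rw [Ideal.span_mul_span'] at h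
  refine Ideal.span_mono ?_ h
  rintro _ ⟨_, ⟨m, hm, rfl⟩, _, ⟨m', hm', rfl⟩, rfl⟩
  refine ⟨m + m', ?_, ?_⟩
  · simp only [Pi.add_apply, add_mul, Finset.sum_add_distrib]
    omega
  · simp [pow_add, Finset.prod_mul_distrib]

theorem filtr_anti (b : Fin s → H) (c : Fin s → ℕ) {v w : ℕ} (h : v ≤ w) :
    filtr p b c w ≤ filtr p b c v := by
  apply Ideal.span_mono
  rintro _ ⟨m, hm, rfl⟩
  exact ⟨m, h.trans hm, rfl⟩

theorem oneSub_pow (g : H) (a : ℕ) : oneSub p g ^ p ^ a = oneSub p (p ^ a • g) := by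
  unfold oneSub
  have : CharP (AddMonoidAlgebra (ZMod p) H) p :=
    charP_of_injective_algebraMap (RingHom.injective (algebraMap (ZMod p) _)) p
  rw [sub_pow_char_pow, one_pow, AddMonoidAlgebra.single_pow, one_pow]

theorem filtr_eq_bot (b : Fin s → H) (c k : Fin s → ℕ) (hb : ∀ i, p ^ k i • b i = 0) {w : ℕ}
    (hw : ∑ i, (p ^ k i - 1) * c i < w) : filtr p b c w = ⊥ := by
  unfold filtr
  rw [Ideal.span_eq_bot]
  rintro _ ⟨m, hm, rfl⟩
  obtain ⟨i, -, hi⟩ := Finset.exists_lt_of_sum_lt (hw.trans_le hm)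
  have hi' : p ^ k i ≤ m i := by
    have := lt_of_mul_lt_mul_right hi (Nat.zero_le _)
    omega
  apply Finset.prod_eq_zero (Finset.mem_univ i)
  apply pow_eq_zero_of_le hi'
  rw [oneSub_pow, hb]
  simp [oneSub, AddMonoidAlgebra.one_def]

theorem oneSub_add (g h : H) :
    oneSub p (g + h) = oneSub p g + AddMonoidAlgebra.single g 1 * oneSub p h := by
  unfold oneSub
  rw [mul_sub, AddMonoidAlgebra.single_mul_single]
  simp

theorem oneSub_zero : oneSub p (0 : H) = 0 := by
  simp [oneSub, AddMonoidAlgebra.one_def]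

theorem oneSub_nsmul_mem (I : Ideal (AddMonoidAlgebra (ZMod p) H)) {g : H} (hg : oneSub p g ∈ I)
    (n : ℕ) : oneSub p (n • g) ∈ I := by
  induction n with
  | zero => simp [oneSub_zero]
  | succ n ih =>
    rw [succ_nsmul, oneSub_add]
    exact I.add_mem ih (I.mul_mem_left _ hg)

theorem oneSub_sum_mem (I : Ideal (AddMonoidAlgebra (ZMod p) H)) {t : Finset (Fin s)} {f : Fin s → H}
    (hg : ∀ i ∈ t, oneSub p (f i) ∈ I) : oneSub p (∑ i ∈ t, f i) ∈ I := by
  classical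
  induction t using Finset.induction_on with
  | empty => simp [oneSub_zero]
  | insert a t ha ih =>
    rw [Finset.sum_insert ha, oneSub_add]
    exact I.add_mem (hg _ (by simp)) (I.mul_mem_left _ (ih fun i hi => hg i (by simp [hi])))

/-- The coordinates `b`, `k` describe a decomposition of `H` into cyclic groups. -/
def IsCoord (p : ℕ) {H : Type*} [AddCommGroup H] {s : ℕ} (b : Fin s → H) (k : Fin s → ℕ) : Prop :=
  (∀ i, p ^ k i • b i = 0) ∧ ∀ g : H, ∃ c : Fin s → ℕ, g = ∑ i, c i • b i ∧
    ∀ a : ℕ, p ^ a • g = 0 → ∀ i, p ^ (k i - a) ∣ c i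

theorem oneSub_mem (b : Fin s → H) (k : Fin s → ℕ) (hbk : IsCoord p b k) (n : ℕ)
    (hn : ∀ i, k i ≤ n) (g : H) (a : ℕ) (ha : p ^ a • g = 0) :
    oneSub p g ∈ filtr p b (fun i => p ^ (n - k i)) (p ^ (n - a)) := by
  obtain ⟨c, hc, hd⟩ := hbk.2 g
  rw [hc]
  apply oneSub_sum_mem
  intro i _
  obtain ⟨d, hd⟩ := hd a ha i
  rw [hd, mul_comm, mul_smul]
  apply oneSub_nsmul_mem
  rw [← oneSub_pow]
  apply Ideal.subset_span
  refine ⟨Pi.single i (p ^ (k i - a)), ?_, ?_⟩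
  · rw [Finset.sum_eq_single i]
    · simp only [Pi.single_eq_same]
      rw [← pow_add]
      apply Nat.pow_le_pow_right (Fact.out : p.Prime).pos
      have := hn i
      omega
    · intro j _ hj
      simp [Pi.single_eq_of_ne hj]
    · simp
  · rw [Finset.prod_eq_single i]
    · simp
    · intro j _ hj
      simp [Pi.single_eq_of_ne hj]
    · simp

theorem coeff_ne_zero (S : Multiset H) (x : H) (hx : (S.map (oneSub p)).prod.coeff x ≠ 0) :
    ∃ T ≤ S, T.sum = x := by
  induction S using Multiset.induction_on generalizing x with
  | empty =>
    refine ⟨0, le_rfl, ?_⟩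
    by_contra h
    apply hx
    simp [AddMonoidAlgebra.one_def] at h ⊢
    exact Finsupp.single_eq_of_ne (fun h' => h h'.symm)
  | cons g S ih =>
    rw [Multiset.map_cons, Multiset.prod_cons] at hx
    by_cases h0 : (S.map (oneSub p)).prod.coeff x = 0
    · have : (S.map (oneSub p)).prod.coeff (-g + x) ≠ 0 := by
        intro h
        apply hx
        rw [oneSub, sub_mul, one_mul, AddMonoidAlgebra.coeff_sub]
        simp [h0, h]
      obtain ⟨T, hT, hs⟩ := ih _ this
      exact ⟨g ::ₘ T, Multiset.cons_le_cons _ hT, by simp [hs]⟩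
    · obtain ⟨T, hT, hs⟩ := ih _ h0
      exact ⟨T, hT.trans (Multiset.le_cons_self _ _), hs⟩

theorem coeff_zero (S : Multiset H) (hS : IsZeroSumFree S) :
    (S.map (oneSub p)).prod.coeff 0 = 1 := by
  induction S using Multiset.induction_on with
  | empty => simp [AddMonoidAlgebra.one_def]
  | cons g S ih =>
    have h1 := ih fun T hT => hS T (hT.trans (Multiset.le_cons_self _ _))
    have h2 : (S.map (oneSub p)).prod.coeff (-g) = 0 := by
      by_contra h
      obtain ⟨T, hT, hs⟩ := coeff_ne_zero S _ h
      exact hS (g ::ₘ T) (Multiset.cons_le_cons _ hT) (by simp) (by simp [hs])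
    rw [Multiset.map_cons, Multiset.prod_cons]
    rw [oneSub, sub_mul, one_mul, AddMonoidAlgebra.coeff_sub]
    simp [h1, h2]

theorem oneSub_prod_mem (b : Fin s → H) (k : Fin s → ℕ) (hbk : IsCoord p b k) (n : ℕ)
    (hn : ∀ i, k i ≤ n) (f : H → ℕ) (hf : ∀ g, p ^ f g • g = 0) (S : Multiset H) :
    (S.map (oneSub p)).prod ∈
      filtr p b (fun i => p ^ (n - k i)) (S.map fun g => p ^ (n - f g)).sum := by
  induction S using Multiset.induction_on with
  | empty =>
    simp only [Multiset.map_zero, Multiset.prod_zero, Multiset.sum_zero]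
    exact Ideal.subset_span ⟨0, by simp, by simp⟩
  | cons g S ih =>
    simp only [Multiset.map_cons, Multiset.prod_cons, Multiset.sum_cons]
    exact filtr_mul _ _ _ _ (oneSub_mem b k hbk n hn g _ (hf g)) ih

theorem zsf_nat_bound (b : Fin s → H) (k : Fin s → ℕ) (hbk : IsCoord p b k) (n : ℕ)
    (hn : ∀ i, k i ≤ n) (f : H → ℕ) (hf : ∀ g, p ^ f g • g = 0) (S : Multiset H)
    (hS : IsZeroSumFree S) :
    (S.map fun g => p ^ (n - f g)).sum ≤ ∑ i, (p ^ k i - 1) * p ^ (n - k i) := by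
  by_contra! h
  have h1 := oneSub_prod_mem b k hbk n hn f hf S
  rw [filtr_eq_bot b _ k hbk.1 h, Ideal.mem_bot] at h1
  have h2 := coeff_zero (p := p) S hS
  rw [h1] at h2
  simp at h2

theorem zsf_bound (b : Fin s → H) (k : Fin s → ℕ) (hbk : IsCoord p b k) (n : ℕ)
    (hn : ∀ i, k i ≤ n) (hexp : ∀ g : H, p ^ n • g = 0) (S : Multiset H)
    (hS : IsZeroSumFree S) :
    crossNum S ≤ ∑ i, ((p ^ k i : ℚ) - 1) / (p ^ k i : ℚ) := by
  have hp : p.Prime := Fact.out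
  have hp0 : (p : ℚ) ≠ 0 := by exact_mod_cast hp.ne_zero
  have hf : ∀ g : H, ∃ a ≤ n, addOrderOf g = p ^ a := fun g =>
    (Nat.dvd_prime_pow hp).1 (addOrderOf_dvd_of_nsmul_eq_zero (hexp g))
  choose f hfn hf using hf
  have h := zsf_nat_bound b k hbk n hn f (fun g => by rw [← hf]; exact addOrderOf_nsmul_eq_zero g) S hS
  have h' : (((S.map fun g => p ^ (n - f g)).sum : ℕ) : ℚ) ≤
    ((∑ i, (p ^ k i - 1) * p ^ (n - k i) : ℕ) : ℚ) := by exact_mod_cast h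
  have e1 : (((S.map fun g => p ^ (n - f g)).sum : ℕ) : ℚ) = p ^ n * crossNum S := by
    unfold crossNum
    rw [← Multiset.sum_map_mul_left, Nat.cast_multiset_sum, Multiset.map_map]
    congr 1
    apply Multiset.map_congr rfl
    intro g _
    simp only [Function.comp, hf g]
    push_cast
    rw [pow_sub₀ _ hp0 (hfn g)]
    simp
  have e2 : ((∑ i, (p ^ k i - 1) * p ^ (n - k i) : ℕ) : ℚ) =
      p ^ n * ∑ i, ((p ^ k i : ℚ) - 1) / (p ^ k i : ℚ) := by
    rw [Finset.mul_sum]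
    push_cast
    apply Finset.sum_congr rfl
    intro i _
    rw [Nat.cast_sub (Nat.one_le_pow _ _ hp.pos), pow_sub₀ _ hp0 (hn i)]
    push_cast
    ring
  rw [e1, e2] at h'
  have : (0 : ℚ) < p ^ n := by
    have := hp.pos
    positivity
  exact le_of_mul_le_mul_left h' this

theorem crossNum_cons {G : Type*} [AddCommGroup G] (g : G) (S : Multiset G) :
    crossNum (g ::ₘ S) = 1 / (addOrderOf g : ℚ) + crossNum S := by
  simp [crossNum]

theorem mzs_bound (b : Fin s → H) (k : Fin s → ℕ) (hbk : IsCoord p b k) (n : ℕ)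
    (hn : ∀ i, k i ≤ n) (hexp : ∀ g : H, p ^ n • g = 0) (e : H) (he : addOrderOf e = p ^ n)
    (S : Multiset H) (hS : IsMinZeroSum S) :
    crossNum S ≤ 1 / (p ^ n : ℚ) + ∑ i, ((p ^ k i : ℚ) - 1) / (p ^ k i : ℚ) := by
  have hp : p.Prime := Fact.out
  have hp0 : (p : ℚ) ≠ 0 := by exact_mod_cast hp.ne_zero
  obtain ⟨hS0, hSs, hSm⟩ := hS
  have hf : ∀ g : H, ∃ a ≤ n, addOrderOf g = p ^ a := fun g =>
    (Nat.dvd_prime_pow hp).1 (addOrderOf_dvd_of_nsmul_eq_zero (hexp g))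
  choose f hfn hf using hf
  -- an element of maximal order
  obtain ⟨z, hz, hmax⟩ : ∃ z ∈ S, ∀ g ∈ S, f g ≤ f z := by
    classical
    have : S.toFinset.Nonempty := by simpa [Multiset.toFinset_nonempty] using hS0
    obtain ⟨z, hz, h⟩ := Finset.exists_max_image S.toFinset f this
    exact ⟨z, by simpa using hz, fun g hg => h g (by simpa using hg)⟩
  obtain ⟨S', rfl⟩ := Multiset.exists_cons_of_mem hz
  have hzsf : IsZeroSumFree (Multiset.replicate (p ^ (n - f z) - 1) e + S') := by
    intro T hT hT0 hTs
    classical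
    obtain ⟨A, B, hA, hB, rfl⟩ : ∃ A B, A ≤ Multiset.replicate (p ^ (n - f z) - 1) e ∧ B ≤ S' ∧
        T = A + B := by
      refine ⟨T ∩ Multiset.replicate (p ^ (n - f z) - 1) e,
        T - Multiset.replicate (p ^ (n - f z) - 1) e, Multiset.inter_le_right, ?_, ?_⟩
      · rwa [tsub_le_iff_left]
      · rw [add_comm]; exact (Multiset.sub_add_inter _ _).symm
    obtain ⟨j, hj, rfl⟩ := Multiset.le_replicate_iff.1 hA
    rw [Multiset.sum_add, Multiset.sum_replicate] at hTs
    have hBs : p ^ f z • B.sum = 0 := by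
      rw [Multiset.smul_sum]
      apply Multiset.sum_eq_zero
      intro x hx
      obtain ⟨g, hg, rfl⟩ := Multiset.mem_map.1 hx
      apply addOrderOf_dvd_iff_nsmul_eq_zero.1
      rw [hf]
      exact pow_dvd_pow _ (hmax g (Multiset.mem_cons_of_mem (Multiset.mem_of_le hB hg)))
    have h1 : p ^ f z • j • e = 0 := by
      have := congrArg (fun x => p ^ f z • x) hTs
      simpa [smul_add, hBs] using this
    rw [← mul_smul, ← addOrderOf_dvd_iff_nsmul_eq_zero, he] at h1
    have h2 : p ^ (n - f z) ∣ j := by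
      have h3 : p ^ n = p ^ f z * p ^ (n - f z) := by rw [← pow_add]; congr 1; have := hfn z; omega
      rw [h3] at h1
      exact Nat.dvd_of_mul_dvd_mul_left (pow_pos hp.pos _) h1
    have h3 : j = 0 := Nat.eq_zero_of_dvd_of_lt h2 (by
      have : 0 < p ^ (n - f z) := pow_pos hp.pos _
      omega)
    subst h3
    simp only [Multiset.replicate_zero, zero_add, zero_smul] at hT0 hTs
    exact hSm B (hB.trans_lt (Multiset.lt_cons_self _ _)) hT0 hTs
  have h := zsf_bound b k hbk n hn hexp _ hzsf
  rw [crossNum_cons]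
  have e1 : crossNum (Multiset.replicate (p ^ (n - f z) - 1) e + S') =
      1 / (addOrderOf z : ℚ) - 1 / p ^ n + crossNum S' := by
    unfold crossNum
    rw [Multiset.map_add, Multiset.sum_add, Multiset.map_replicate, Multiset.sum_replicate, he, hf,
      nsmul_eq_mul, Nat.cast_sub (Nat.one_le_pow _ _ hp.pos)]
    push_cast
    rw [pow_sub₀ _ hp0 (hfn z)]
    field_simp
  rw [e1] at h
  linarith

end PGroup

section Combi

set_option linter.unusedSectionVars false

theorem mzs_merge {G : Type*} [AddCommGroup G] {x y : G} {S : Multiset G}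
    (h : IsMinZeroSum (x ::ₘ y ::ₘ S)) : IsMinZeroSum ((x + y) ::ₘ S) := by
  obtain ⟨-, hs, hm⟩ := h
  refine ⟨by simp, by simpa [add_assoc] using hs, ?_⟩
  intro T hT hT0 hTs
  by_cases hx : x + y ∈ T
  · obtain ⟨T', rfl⟩ := Multiset.exists_cons_of_mem hx
    have h1 : T' < S := Multiset.cons_lt_cons_iff.1 hT
    refine hm (x ::ₘ y ::ₘ T') ?_ (by simp) (by simpa [add_assoc] using hTs)
    exact Multiset.cons_lt_cons_iff.2 (Multiset.cons_lt_cons_iff.2 h1)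
  · have h1 : T ≤ S := (Multiset.le_cons_of_notMem hx).1 hT.le
    refine hm T ?_ hT0 hTs
    exact (h1.trans (Multiset.le_cons_self _ _)).trans_lt (Multiset.lt_cons_self _ _)

/-- Alternating sum of the weights of a list. -/
def altSum {G : Type*} (v : G → ℚ) : List G → ℚ
  | [] => 0
  | a :: l => v a - altSum v l

theorem altSum_bound {G : Type*} (v : G → ℚ) (ε : ℚ) (hε : 0 < ε) (hv : ∀ g, ε ≤ v g)
    (L : List G) (hL : L.Pairwise fun a b => v b ≤ v a) :
    0 ≤ altSum v L ∧ (Odd L.length → ε ≤ altSum v L) ∧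
      ∀ M, (∀ a ∈ L, v a ≤ M) → 0 ≤ M → altSum v L ≤ M := by
  induction L with
  | nil => simp [altSum]
  | cons a L ih =>
    rw [List.pairwise_cons] at hL
    obtain ⟨h1, h2, h3⟩ := ih hL.2
    have hva := hv a
    have h4 := h3 (v a) hL.1 (by linarith)
    refine ⟨by simp only [altSum]; linarith, ?_, ?_⟩
    · intro ho
      cases L with
      | nil => simpa [altSum] using hva
      | cons b L =>
        have ho' : Odd L.length := by
          simp only [List.length_cons] at ho
          grind
        rw [List.pairwise_cons] at hL
        have hb := hL.1 b (by simp)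
        have hL2 := hL.2
        -- direct: use the bound for the tail of the tail
        have key : ∀ L : List G, Odd L.length → (L.Pairwise fun a b => v b ≤ v a) →
            ε ≤ altSum v L := by
          intro L
          induction L using List.twoStepInduction with
          | nil => simp
          | singleton x => intro _ _; simpa [altSum] using hv x
          | cons_cons x y l ih _ =>
            intro ho hp
            rw [List.pairwise_cons, List.pairwise_cons] at hp
            have := ih (by simp only [List.length_cons] at ho; grind) hp.2.2
            have := hp.1 y (by simp)
            simp only [altSum]
            linarith
        have := key L ho' hL2.2
        simp only [altSum]
        linarith
    · intro M hM _
      have := hM a (by simp)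
      simp only [altSum]
      linarith

theorem altSum_even {G : Type*} (v : G → ℚ) (ε : ℚ) (hε : 0 < ε) (hv : ∀ g, ε ≤ v g)
    (hv1 : ∀ g, v g ≤ 1)
    (L : List G) (hL : L.Pairwise fun a b => v b ≤ v a) (he : Even L.length) (hε1 : ε ≤ 1) :
    altSum v L ≤ 1 - ε := by
  cases L with
  | nil => simp [altSum]; linarith
  | cons a L =>
    rw [List.pairwise_cons] at hL
    have := (altSum_bound v ε hε hv L hL.2).2.1 (by simp only [List.length_cons] at he; grind)
    have := hv1 a
    simp only [altSum]
    linarith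

variable {G U : Type*} [AddCommGroup G] [AddCommGroup U] (π : G →+ U) (v : G → ℚ)

/-- total weight -/
def wt {G : Type*} (v : G → ℚ) (S : Multiset G) : ℚ := (S.map v).sum

theorem wt_cons {G : Type*} (v : G → ℚ) (a : G) (S : Multiset G) :
    wt v (a ::ₘ S) = v a + wt v S := by simp [wt]

theorem wt_add {G : Type*} (v : G → ℚ) (R S : Multiset G) :
    wt v (R + S) = wt v R + wt v S := by simp [wt]

theorem pairing (hu : ∀ u : U, u + u = 0) (hult : ∀ x y, min (v x) (v y) ≤ v (x + y)) (u : U)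
    (L : List G) (hL : L.Pairwise fun a b => v b ≤ v a) (hLu : ∀ a ∈ L, π a = u)
    (R : Multiset G) (hR : IsMinZeroSum ((L : Multiset G) + R)) :
    ∃ Q ρ : Multiset G, (∀ a ∈ Q, π a = 0) ∧ (∀ a ∈ ρ, π a = u) ∧ ρ.card = L.length % 2 ∧
      IsMinZeroSum (Q + (ρ + R)) ∧ wt v L ≤ 2 * wt v Q + altSum v L := by
  induction L using List.twoStepInduction generalizing R with
  | nil => exact ⟨0, 0, by simp, by simp, by simp, by simpa using hR, by simp [wt, altSum]⟩
  | singleton x =>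
    exact ⟨0, {x}, by simp, by simpa using hLu, by simp, by simpa using hR, by simp [wt, altSum]⟩
  | cons_cons x y l ih _ =>
    rw [List.pairwise_cons, List.pairwise_cons] at hL
    have h1 : IsMinZeroSum ((l : Multiset G) + ((x + y) ::ₘ R)) := by
      rw [Multiset.add_cons]
      apply mzs_merge
      simpa [← Multiset.cons_coe] using hR
    obtain ⟨Q, ρ, hQ, hρ, hc, hm, hw⟩ := ih hL.2.2 (fun a ha => hLu a (by simp [ha])) _ h1
    refine ⟨(x + y) ::ₘ Q, ρ, ?_, hρ, ?_, ?_, ?_⟩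
    · intro a ha
      rcases Multiset.mem_cons.1 ha with rfl | ha
      · rw [_root_.map_add, hLu x (by simp), hLu y (by simp), hu]
      · exact hQ a ha
    · simp only [List.length_cons]; omega
    · simpa [Multiset.add_cons] using hm
    · have h2 := hult x y
      rw [min_eq_right (hL.1 y (by simp))] at h2
      rw [← Multiset.cons_coe, ← Multiset.cons_coe, wt_cons, wt_cons, wt_cons]
      simp only [altSum]
      linarith

/-- Pair up three classes, and merge the leftovers. -/
theorem pairing3 (hu : ∀ u : U, u + u = 0) (hult : ∀ x y, min (v x) (v y) ≤ v (x + y))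
    (ε : ℚ) (hv : ∀ g, ε ≤ v g) (u₁ u₂ u₃ : U) (hsum : u₁ + u₂ + u₃ = 0)
    (A B C : List G) (hA : A.Pairwise fun a b => v b ≤ v a) (hB : B.Pairwise fun a b => v b ≤ v a)
    (hC : C.Pairwise fun a b => v b ≤ v a)
    (hAu : ∀ a ∈ A, π a = u₁) (hBu : ∀ a ∈ B, π a = u₂) (hCu : ∀ a ∈ C, π a = u₃)
    (hAB : A.length % 2 = B.length % 2) (hAC : A.length % 2 = C.length % 2)
    (R : Multiset G) (hR0 : ∀ a ∈ R, π a = 0)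
    (hR : IsMinZeroSum ((A : Multiset G) + ((B : Multiset G) + ((C : Multiset G) + R)))) :
    ∃ T : Multiset G, (∀ a ∈ T, π a = 0) ∧ IsMinZeroSum T ∧
      wt v A + wt v B + wt v C + 2 * wt v R + 2 * ε * (A.length % 2 : ℕ) ≤
        2 * wt v T + altSum v A + altSum v B + altSum v C := by
  obtain ⟨Q₁, ρ₁, hQ₁, hρ₁, hc₁, hm₁, hw₁⟩ := pairing π v hu hult u₁ A hA hAu _ hR
  have e₁ : Q₁ + (ρ₁ + ((B : Multiset G) + ((C : Multiset G) + R))) = B + ((C : Multiset G) + (Q₁ + ρ₁ + R)) := by abel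
  rw [e₁] at hm₁
  obtain ⟨Q₂, ρ₂, hQ₂, hρ₂, hc₂, hm₂, hw₂⟩ := pairing π v hu hult u₂ B hB hBu _ hm₁
  have e₂ : Q₂ + (ρ₂ + ((C : Multiset G) + (Q₁ + ρ₁ + R))) = C + (Q₁ + ρ₁ + R + Q₂ + ρ₂) := by abel
  rw [e₂] at hm₂
  obtain ⟨Q₃, ρ₃, hQ₃, hρ₃, hc₃, hm₃, hw₃⟩ := pairing π v hu hult u₃ C hC hCu _ hm₂
  have e₃ : Q₃ + (ρ₃ + (Q₁ + ρ₁ + R + Q₂ + ρ₂)) = ρ₁ + ρ₂ + ρ₃ + (Q₁ + Q₂ + Q₃ + R) := by abel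
  rw [e₃] at hm₃
  have hQ : ∀ a ∈ Q₁ + Q₂ + Q₃ + R, π a = 0 := by
    intro a ha
    simp only [Multiset.mem_add] at ha
    rcases ha with ((ha | ha) | ha) | ha
    exacts [hQ₁ a ha, hQ₂ a ha, hQ₃ a ha, hR0 a ha]
  rcases Nat.mod_two_eq_zero_or_one A.length with h | h
  · have z₁ : ρ₁ = 0 := Multiset.card_eq_zero.1 (by omega)
    have z₂ : ρ₂ = 0 := Multiset.card_eq_zero.1 (by omega)
    have z₃ : ρ₃ = 0 := Multiset.card_eq_zero.1 (by omega)
    subst z₁ z₂ z₃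
    refine ⟨Q₁ + Q₂ + Q₃ + R, hQ, by simpa using hm₃, ?_⟩
    simp only [wt_add, h, Nat.cast_zero]
    linarith
  · obtain ⟨x, rfl⟩ := Multiset.card_eq_one.1 (show ρ₁.card = 1 by omega)
    obtain ⟨y, rfl⟩ := Multiset.card_eq_one.1 (show ρ₂.card = 1 by omega)
    obtain ⟨z, rfl⟩ := Multiset.card_eq_one.1 (show ρ₃.card = 1 by omega)
    refine ⟨(x + y + z) ::ₘ (Q₁ + Q₂ + Q₃ + R), ?_, ?_, ?_⟩
    · intro a ha
      rcases Multiset.mem_cons.1 ha with rfl | ha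
      · rw [_root_.map_add, _root_.map_add, hρ₁ x (by simp), hρ₂ y (by simp), hρ₃ z (by simp), hsum]
      · exact hQ a ha
    · apply mzs_merge
      rw [Multiset.cons_swap]
      have e : z ::ₘ (x + y) ::ₘ (Q₁ + Q₂ + Q₃ + R) = (x + y) ::ₘ z ::ₘ (Q₁ + Q₂ + Q₃ + R) :=
        Multiset.cons_swap _ _ _
      rw [e]
      apply mzs_merge
      rw [← Multiset.singleton_add x, ← Multiset.singleton_add y, ← Multiset.singleton_add z]
      simpa only [add_assoc] using hm₃
    · rw [wt_cons]
      simp only [wt_add, h, Nat.cast_one]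
      have := hv (x + y + z)
      linarith

theorem three_class (hu : ∀ u : U, u + u = 0) (hult : ∀ x y, min (v x) (v y) ≤ v (x + y))
    (ε : ℚ) (hε : 0 < ε) (hε1 : ε ≤ 1) (hv : ∀ g, ε ≤ v g) (hv1 : ∀ g, v g ≤ 1)
    (K : ℚ) (hK : ∀ T : Multiset G, (∀ a ∈ T, π a = 0) → IsMinZeroSum T → wt v T ≤ K)
    (u₁ u₂ u₃ : U) (hsum : u₁ + u₂ + u₃ = 0)
    (A B C : List G) (hA : A.Pairwise fun a b => v b ≤ v a) (hB : B.Pairwise fun a b => v b ≤ v a)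
    (hC : C.Pairwise fun a b => v b ≤ v a)
    (hAu : ∀ a ∈ A, π a = u₁) (hBu : ∀ a ∈ B, π a = u₂) (hCu : ∀ a ∈ C, π a = u₃)
    (hAB : A.length % 2 = B.length % 2) (hAC : A.length % 2 = C.length % 2)
    (hmA : ∀ c ∈ C.head?, ∀ a ∈ A.head?, v c ≤ v a)
    (hmB : ∀ c ∈ C.head?, ∀ a ∈ B.head?, v c ≤ v a)
    (hCe : C ≠ [] → A ≠ [] ∧ B ≠ [])
    (R : Multiset G) (hR0 : ∀ a ∈ R, π a = 0)
    (hR : IsMinZeroSum ((A : Multiset G) + ((B : Multiset G) + ((C : Multiset G) + R)))) :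
    (wt v A + wt v B + wt v C) / 2 + wt v R ≤ K + 1 - ε / 2 := by
  obtain ⟨T, hT0, hT, hw⟩ := pairing3 π v hu hult ε hv u₁ u₂ u₃ hsum A B C hA hB hC hAu hBu hCu
    hAB hAC R hR0 hR
  have hTK := hK T hT0 hT
  cases C with
  | nil =>
    have h0 : A.length % 2 = 0 := by simpa using hAC
    have a1 := altSum_even v ε hε hv hv1 A hA (Nat.even_iff.2 h0) hε1
    have a2 := altSum_even v ε hε hv hv1 B hB (Nat.even_iff.2 (by omega)) hε1
    rw [h0] at hw
    simp only [altSum, Nat.cast_zero] at hw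
    linarith
  | cons c C =>
    obtain ⟨hA', hB'⟩ := hCe (by simp)
    obtain ⟨a, A, rfl⟩ := List.exists_cons_of_ne_nil hA'
    obtain ⟨b, B, rfl⟩ := List.exists_cons_of_ne_nil hB'
    have hca : v c ≤ v a := hmA c (by simp) a (by simp)
    have hcb : v c ≤ v b := hmB c (by simp) b (by simp)
    simp only [List.length_cons] at hAB hAC hw
    have hR2 : IsMinZeroSum ((A : Multiset G) + ((B : Multiset G) + ((C : Multiset G) + ((a + b + c) ::ₘ R)))) := by
      have e : (A : Multiset G) + ((B : Multiset G) + ((C : Multiset G) + ((a + b + c) ::ₘ R))) =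
          (a + b + c) ::ₘ ((A : Multiset G) + ((B : Multiset G) + ((C : Multiset G) + R))) := by
        simp only [← Multiset.singleton_add (a + b + c)]
        abel
      rw [e]
      apply mzs_merge
      rw [Multiset.cons_swap]
      have e' : c ::ₘ (a + b) ::ₘ ((A : Multiset G) + ((B : Multiset G) + ((C : Multiset G) + R))) =
          (a + b) ::ₘ c ::ₘ ((A : Multiset G) + ((B : Multiset G) + ((C : Multiset G) + R))) := Multiset.cons_swap _ _ _
      rw [e']
      apply mzs_merge
      have e2 : a ::ₘ b ::ₘ c ::ₘ ((A : Multiset G) + ((B : Multiset G) + ((C : Multiset G) + R))) =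
          ((a :: A : List G) : Multiset G) + (((b :: B : List G) : Multiset G) +
            (((c :: C : List G) : Multiset G) + R)) := by
        simp only [← Multiset.cons_coe, ← Multiset.singleton_add]
        abel
      rw [e2]
      exact hR
    obtain ⟨T₂, hT0₂, hT₂, hw₂⟩ := pairing3 π v hu hult ε hv u₁ u₂ u₃ hsum A B C
      (List.pairwise_cons.1 hA).2 (List.pairwise_cons.1 hB).2 (List.pairwise_cons.1 hC).2
      (fun x hx => hAu x (by simp [hx])) (fun x hx => hBu x (by simp [hx]))
      (fun x hx => hCu x (by simp [hx])) (by omega) (by omega) ((a + b + c) ::ₘ R)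
      (by
        intro x hx
        rcases Multiset.mem_cons.1 hx with rfl | hx
        · rw [_root_.map_add, _root_.map_add, hAu a (by simp), hBu b (by simp), hCu c (by simp), hsum]
        · exact hR0 x hx) hR2
    have hTK₂ := hK T₂ hT0₂ hT₂
    have habc : v c ≤ v (a + b + c) := by
      have h1 := hult a b
      have h2 := hult (a + b) c
      have h3 : v c ≤ v (a + b) := (le_min hca hcb).trans h1
      exact (le_min h3 le_rfl).trans h2
    have hpar : (((A.length + 1) % 2 : ℕ) : ℚ) + ((A.length % 2 : ℕ) : ℚ) = 1 := by
      have : (A.length + 1) % 2 + A.length % 2 = 1 := by omega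
      exact_mod_cast this
    have hpar' := congrArg (fun t => ε * t) hpar
    simp only [mul_add, mul_one] at hpar'
    have ha1 := hv1 a
    have hb1 := hv1 b
    simp only [altSum, ← Multiset.cons_coe, wt_cons] at hw hw₂ ⊢
    linarith

theorem exists_sorted (M : Multiset G) :
    ∃ L : List G, (L : Multiset G) = M ∧ L.Pairwise fun a b => v b ≤ v a := by
  classical
  induction M using Quotient.inductionOn with
  | h l =>
    have : Std.Total (fun a b : G => v b ≤ v a) := ⟨fun a b => le_total _ _⟩
    have : IsTrans G (fun a b : G => v b ≤ v a) := ⟨fun a b c h1 h2 => h2.trans h1⟩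
    exact ⟨l.insertionSort (fun a b => v b ≤ v a),
      Quotient.sound (List.perm_insertionSort _ l), List.pairwise_insertionSort _ l⟩

/-- Top weight of a sorted list (zero when empty). -/
def topWt {G : Type*} (v : G → ℚ) : List G → ℚ
  | [] => 0
  | a :: _ => v a

theorem three_class' (hu : ∀ u : U, u + u = 0) (hult : ∀ x y, min (v x) (v y) ≤ v (x + y))
    (ε : ℚ) (hε : 0 < ε) (hε1 : ε ≤ 1) (hv : ∀ g, ε ≤ v g) (hv1 : ∀ g, v g ≤ 1)
    (K : ℚ) (hK : ∀ T : Multiset G, (∀ a ∈ T, π a = 0) → IsMinZeroSum T → wt v T ≤ K)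
    (u₁ u₂ u₃ : U) (hsum : u₁ + u₂ + u₃ = 0)
    (A B C : List G) (hA : A.Pairwise fun a b => v b ≤ v a) (hB : B.Pairwise fun a b => v b ≤ v a)
    (hC : C.Pairwise fun a b => v b ≤ v a)
    (hAu : ∀ a ∈ A, π a = u₁) (hBu : ∀ a ∈ B, π a = u₂) (hCu : ∀ a ∈ C, π a = u₃)
    (hAB : A.length % 2 = B.length % 2) (hAC : A.length % 2 = C.length % 2)
    (hmA : topWt v C ≤ topWt v A)
    (hmB : topWt v C ≤ topWt v B)
    (R : Multiset G) (hR0 : ∀ a ∈ R, π a = 0)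
    (hR : IsMinZeroSum ((A : Multiset G) + ((B : Multiset G) + ((C : Multiset G) + R)))) :
    (wt v A + wt v B + wt v C) / 2 + wt v R ≤ K + 1 - ε / 2 := by
  have hpos : ∀ g, 0 < v g := fun g => hε.trans_le (hv g)
  refine three_class π v hu hult ε hε hε1 hv hv1 K hK u₁ u₂ u₃ hsum A B C hA hB hC hAu hBu hCu
    hAB hAC ?_ ?_ ?_ R hR0 hR
  · intro c hc a ha
    cases C <;> cases A <;> simp_all [topWt]
  · intro c hc a ha
    cases C <;> cases B <;> simp_all [topWt]
  · intro hne
    cases C with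
    | nil => exact absurd rfl hne
    | cons c C =>
      have := hpos c
      constructor
      · rintro rfl
        simp only [topWt] at hmA
        linarith
      · rintro rfl
        simp only [topWt] at hmB
        linarith

theorem combi (hu : ∀ u : U, u + u = 0) (hult : ∀ x y, min (v x) (v y) ≤ v (x + y))
    (ε : ℚ) (hε : 0 < ε) (hε1 : ε ≤ 1) (hv : ∀ g, ε ≤ v g) (hv1 : ∀ g, v g ≤ 1)
    (K : ℚ) (hK : ∀ T : Multiset G, (∀ a ∈ T, π a = 0) → IsMinZeroSum T → wt v T ≤ K)
    (u₁ u₂ u₃ : U) (hsum : u₁ + u₂ + u₃ = 0)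
    (A B C : Multiset G)
    (hAu : ∀ a ∈ A, π a = u₁) (hBu : ∀ a ∈ B, π a = u₂) (hCu : ∀ a ∈ C, π a = u₃)
    (hAB : A.card % 2 = B.card % 2) (hAC : A.card % 2 = C.card % 2)
    (R : Multiset G) (hR0 : ∀ a ∈ R, π a = 0)
    (hR : IsMinZeroSum (A + ((B : Multiset G) + ((C : Multiset G) + R)))) :
    (wt v A + wt v B + wt v C) / 2 + wt v R ≤ K + 1 - ε / 2 := by
  obtain ⟨A, rfl, hA⟩ := exists_sorted v A
  obtain ⟨B, rfl, hB⟩ := exists_sorted v B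
  obtain ⟨C, rfl, hC⟩ := exists_sorted v C
  simp only [Multiset.coe_card] at hAB hAC
  simp only [Multiset.mem_coe] at hAu hBu hCu
  have main := three_class' π v hu hult ε hε hε1 hv hv1 K hK
  by_cases h1 : topWt v C ≤ topWt v A
  · by_cases h2 : topWt v C ≤ topWt v B
    · exact main u₁ u₂ u₃ hsum A B C hA hB hC hAu hBu hCu hAB hAC h1 h2 R hR0 hR
    · have e : (A : Multiset G) + ((B : Multiset G) + ((C : Multiset G) + R)) = C + ((A : Multiset G) + ((B : Multiset G) + R)) := by abel
      have := main u₃ u₁ u₂ (by rw [← hsum]; abel) C A B hC hA hB hCu hAu hBu hAC.symm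
        (by omega) (by linarith) (by linarith) R hR0 (e ▸ hR)
      linarith
  · by_cases h2 : topWt v A ≤ topWt v B
    · have e : (A : Multiset G) + ((B : Multiset G) + ((C : Multiset G) + R)) = C + ((B : Multiset G) + ((A : Multiset G) + R)) := by abel
      have := main u₃ u₂ u₁ (by rw [← hsum]; abel) C B A hC hB hA hCu hBu hAu (by omega)
        (by omega) (by linarith) (by linarith) R hR0 (e ▸ hR)
      linarith
    · have e : (A : Multiset G) + ((B : Multiset G) + ((C : Multiset G) + R)) = C + ((A : Multiset G) + ((B : Multiset G) + R)) := by abel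
      have := main u₃ u₁ u₂ (by rw [← hsum]; abel) C A B hC hA hB hCu hAu hBu hAC.symm
        (by omega) (by linarith) (by linarith) R hR0 (e ▸ hR)
      linarith

end Combi

section Final

variable {p s : ℕ} {Gp : Type*} [AddCommGroup Gp]

/-- The standard generators. -/
noncomputable def stdB {p s : ℕ} {Gp : Type*} [AddCommGroup Gp] {k : Fin s → ℕ}
    (e : Gp ≃+ ∀ i, ZMod (p ^ k i)) (i : Fin s) : Gp :=
  e.symm (Pi.single i 1)

theorem stdB_order {k : Fin s → ℕ} (e : Gp ≃+ ∀ i, ZMod (p ^ k i)) (i : Fin s) :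
    addOrderOf (stdB e i) = p ^ k i := by
  unfold stdB
  rw [AddEquiv.addOrderOf_eq]
  have := addOrderOf_injective (AddMonoidHom.single (fun i => ZMod (p ^ k i)) i)
    (by exact Pi.single_injective (M := fun i => ZMod (p ^ k i)) i) 1
  rw [ZMod.addOrderOf_one] at this
  exact this

theorem stdB_apply {k : Fin s → ℕ} (e : Gp ≃+ ∀ i, ZMod (p ^ k i)) (c : Fin s → ℕ) (i : Fin s) :
    e (∑ j, c j • stdB e j) i = c i := by
  rw [map_sum, Finset.sum_apply, Finset.sum_eq_single i]
  · simp [stdB]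
  · intro j _ hj
    simp [stdB, hj.symm]
  · simp

theorem stdB_coord (hp : p.Prime) {k : Fin s → ℕ} (e : Gp ≃+ ∀ i, ZMod (p ^ k i)) :
    IsCoord p (stdB e) k := by
  have : ∀ i, NeZero (p ^ k i) := fun i => ⟨pow_ne_zero _ hp.ne_zero⟩
  refine ⟨fun i => by rw [← stdB_order e i]; exact addOrderOf_nsmul_eq_zero _, fun g => ?_⟩
  refine ⟨fun i => (e g i).val, ?_, ?_⟩
  · apply e.injective
    ext i
    rw [stdB_apply]
    simp
  · intro a ha i
    have h1 : ((p ^ a * (e g i).val : ℕ) : ZMod (p ^ k i)) = 0 := by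
      have := congrFun (congrArg e ha) i
      rw [_root_.map_nsmul] at this
      simpa using this
    rw [ZMod.natCast_eq_zero_iff] at h1
    rcases le_total (k i) a with h | h
    · simp [Nat.sub_eq_zero_of_le h]
    · have h3 : p ^ k i = p ^ a * p ^ (k i - a) := by rw [← pow_add]; congr 1; omega
      have h4 := h3.symm.dvd.trans h1
      exact Nat.dvd_of_mul_dvd_mul_left (pow_pos hp.pos _) h4

theorem stdB_sum_order [Finite Gp] {k : Fin s → ℕ} (e : Gp ≃+ ∀ i, ZMod (p ^ k i)) :
    addOrderOf (∑ i, stdB e i) = AddMonoid.exponent Gp := by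
  apply Nat.dvd_antisymm (AddMonoid.addOrder_dvd_exponent _)
  apply AddMonoid.exponent_dvd_of_forall_nsmul_eq_zero
  intro g
  apply e.injective
  ext i
  have h := addOrderOf_nsmul_eq_zero (∑ i, stdB e i)
  set N := addOrderOf (∑ i, stdB e i)
  rw [Finset.smul_sum] at h
  have h2 := stdB_apply e (fun _ => N) i
  rw [h] at h2
  simp only [_root_.map_zero, Pi.zero_apply] at h2
  rw [_root_.map_nsmul, Pi.smul_apply, nsmul_eq_mul, ← h2]
  simp

theorem mzs_of_map {G H : Type*} [AddCommGroup G] [AddCommGroup H] (f : H →+ G)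
    (hf : Function.Injective f) (S : Multiset H) (h : IsMinZeroSum (S.map f)) : IsMinZeroSum S := by
  obtain ⟨h0, hs, hm⟩ := h
  refine ⟨by rintro rfl; simp at h0, ?_, ?_⟩
  · apply hf
    rw [map_multiset_sum, hs, _root_.map_zero]
  · intro T hT hT0 hTs
    refine hm (T.map f) (Multiset.map_lt_map hT) (by simpa using hT0) ?_
    rw [← map_multiset_sum, hTs, _root_.map_zero]

/-- projection to the 2-part -/
def prTwo (Gp : Type*) [AddCommGroup Gp] : ZMod 2 × ZMod 2 × Gp →+ ZMod 2 × ZMod 2 where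
  toFun g := (g.1, g.2.1)
  map_zero' := rfl
  map_add' _ _ := rfl

/-- inclusion of the p-part -/
def incP (Gp : Type*) [AddCommGroup Gp] : Gp →+ ZMod 2 × ZMod 2 × Gp where
  toFun g := (0, 0, g)
  map_zero' := rfl
  map_add' _ _ := by simp

/-- weight -/
noncomputable def vP {Gp : Type*} [AddCommGroup Gp] (g : ZMod 2 × ZMod 2 × Gp) : ℚ :=
  1 / (addOrderOf g.2.2 : ℚ)

theorem order_zero (g : ZMod 2 × ZMod 2 × Gp) (h : prTwo Gp g = 0) :
    addOrderOf g = addOrderOf g.2.2 := by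
  obtain ⟨x, y, g⟩ := g
  simp only [prTwo, AddMonoidHom.coe_mk, ZeroHom.coe_mk, Prod.mk_eq_zero] at h
  obtain ⟨rfl, rfl⟩ := h
  simp [Prod.addOrderOf]

theorem order_ne (g : ZMod 2 × ZMod 2 × Gp) (h : prTwo Gp g ≠ 0) (ho : Odd (addOrderOf g.2.2)) :
    addOrderOf g = 2 * addOrderOf g.2.2 := by
  obtain ⟨x, y, g⟩ := g
  simp only [prTwo, AddMonoidHom.coe_mk, ZeroHom.coe_mk, ne_eq, Prod.mk_eq_zero] at h ho
  have h2 : addOrderOf (1 : ZMod 2) = 2 := ZMod.addOrderOf_one 2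
  have hl : Nat.lcm 2 (addOrderOf g) = 2 * addOrderOf g :=
    Nat.Coprime.lcm_eq_mul (Nat.coprime_two_left.2 ho)
  have hz : ∀ x : ZMod 2, x = 0 ∨ x = 1 := by decide
  rcases hz x with rfl | rfl <;> rcases hz y with rfl | rfl
  · simp at h
  · simp [Prod.addOrderOf, h2, hl]
  · simp [Prod.addOrderOf, h2, hl]
  · simp only [Prod.addOrderOf, h2, hl]
    exact Nat.lcm_eq_right (Dvd.intro _ rfl)

theorem classes (S : Multiset (ZMod 2 × ZMod 2 × Gp)) :
    ∃ A B C R : Multiset (ZMod 2 × ZMod 2 × Gp), S = A + (B + (C + R)) ∧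
      (∀ a ∈ A, prTwo Gp a = (1, 0)) ∧ (∀ a ∈ B, prTwo Gp a = (0, 1)) ∧
      (∀ a ∈ C, prTwo Gp a = (1, 1)) ∧ (∀ a ∈ R, prTwo Gp a = 0) := by
  induction S using Multiset.induction_on with
  | empty => exact ⟨0, 0, 0, 0, by simp⟩
  | cons g S ih =>
    obtain ⟨A, B, C, R, rfl, hA, hB, hC, hR⟩ := ih
    have hz : ∀ x : ZMod 2 × ZMod 2, x = (1, 0) ∨ x = (0, 1) ∨ x = (1, 1) ∨ x = 0 := by decide
    rcases hz (prTwo Gp g) with h | h | h | h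
    · exact ⟨g ::ₘ A, B, C, R, by simp, by simpa [h] using hA, hB, hC, hR⟩
    · exact ⟨A, g ::ₘ B, C, R, by simp, hA, by simpa [h] using hB, hC, hR⟩
    · exact ⟨A, B, g ::ₘ C, R, by simp, hA, hB, by simpa [h] using hC, hR⟩
    · exact ⟨A, B, C, g ::ₘ R, by simp, hA, hB, hC, by simpa [h] using hR⟩

theorem crossNum_add {G : Type*} [AddCommGroup G] (S T : Multiset G) :
    crossNum (S + T) = crossNum S + crossNum T := by
  simp [crossNum]

theorem crossNum_zero_class (R : Multiset (ZMod 2 × ZMod 2 × Gp)) (hR : ∀ a ∈ R, prTwo Gp a = 0) :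
    crossNum R = wt vP R := by
  unfold crossNum wt
  congr 1
  apply Multiset.map_congr rfl
  intro g hg
  rw [order_zero g (hR g hg), vP]

theorem crossNum_ne_class (ho : ∀ g : Gp, Odd (addOrderOf g)) (A : Multiset (ZMod 2 × ZMod 2 × Gp))
    (hA : ∀ a ∈ A, prTwo Gp a ≠ 0) : crossNum A = wt vP A / 2 := by
  unfold crossNum wt
  rw [div_eq_mul_inv, ← Multiset.sum_map_mul_right]
  congr 1
  apply Multiset.map_congr rfl
  intro g hg
  rw [order_ne g (hA g hg) (ho _), vP]
  push_cast
  field_simp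

theorem class_sum {G U : Type*} [AddCommGroup G] [AddCommGroup U] (f : G →+ U) (u : U)
    (A : Multiset G) (hA : ∀ a ∈ A, f a = u) : f A.sum = A.card • u := by
  rw [map_multiset_sum, Multiset.map_congr rfl hA, Multiset.map_const', Multiset.sum_replicate]

theorem upper (hp : p.Prime) (hodd : Odd p) [Finite Gp] {k : Fin s → ℕ}
    (e : Gp ≃+ ∀ i, ZMod (p ^ k i)) (n : ℕ) (hn : AddMonoid.exponent Gp = p ^ n)
    (S : Multiset (ZMod 2 × ZMod 2 × Gp)) (hS : IsMinZeroSum S) :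
    crossNum S ≤ 1 / (2 * p ^ n : ℚ) + (1 + ∑ i, ((p ^ k i : ℚ) - 1) / (p ^ k i : ℚ)) := by
  have : Fact p.Prime := ⟨hp⟩
  have hf : ∀ g : Gp, ∃ a ≤ n, addOrderOf g = p ^ a := fun g =>
    (Nat.dvd_prime_pow hp).1 (hn ▸ AddMonoid.addOrder_dvd_exponent g)
  have hexp : ∀ g : Gp, p ^ n • g = 0 := fun g => by
    rw [← hn]; exact AddMonoid.exponent_nsmul_eq_zero g
  have ho : ∀ g : Gp, Odd (addOrderOf g) := fun g => by
    obtain ⟨a, -, h⟩ := hf g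
    rw [h]; exact hodd.pow
  have hkn : ∀ i, k i ≤ n := fun i => by
    have := AddMonoid.addOrder_dvd_exponent (stdB e i)
    rw [stdB_order, hn] at this
    exact (Nat.pow_dvd_pow_iff_le_right hp.one_lt).1 this
  have hppos : (0 : ℚ) < p := by exact_mod_cast hp.pos
  have hp1 : (1 : ℚ) ≤ p := by exact_mod_cast hp.one_le
  set Kp : ℚ := 1 / (p ^ n : ℚ) + ∑ i, ((p ^ k i : ℚ) - 1) / (p ^ k i : ℚ) with hKp
  have hK : ∀ T : Multiset (ZMod 2 × ZMod 2 × Gp), (∀ a ∈ T, prTwo Gp a = 0) → IsMinZeroSum T →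
      wt vP T ≤ Kp := by
    intro T hT0 hT
    have e1 : T = (T.map fun g => g.2.2).map (incP Gp) := by
      rw [Multiset.map_map]
      conv_lhs => rw [← Multiset.map_id T]
      apply Multiset.map_congr rfl
      intro g hg
      have := hT0 g hg
      obtain ⟨x, y, g⟩ := g
      simp only [prTwo, AddMonoidHom.coe_mk, ZeroHom.coe_mk, Prod.mk_eq_zero] at this
      obtain ⟨rfl, rfl⟩ := this
      rfl
    rw [e1] at hT
    have hT' := mzs_of_map (incP Gp) (fun a b h => by simpa [incP] using h) _ hT
    have := mzs_bound (stdB e) k (stdB_coord hp e) n hkn hexp _ ((stdB_sum_order e).trans hn) _ hT'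
    have e2 : crossNum (T.map fun g => g.2.2) = wt vP T := by
      simp only [crossNum, wt, Multiset.map_map]
      rfl
    rw [← e2]
    exact this
  obtain ⟨A, B, C, R, rfl, hA, hB, hC, hR⟩ := classes S
  have hs := congrArg (prTwo Gp) hS.2.1
  rw [Multiset.sum_add, Multiset.sum_add, Multiset.sum_add, _root_.map_add, _root_.map_add,
    _root_.map_add, class_sum _ _ A hA, class_sum _ _ B hB, class_sum _ _ C hC, class_sum _ _ R hR,
    _root_.map_zero] at hs
  have hs1 := congrArg Prod.fst hs
  have hs2 := congrArg Prod.snd hs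
  simp only [Prod.smul_mk, smul_zero, Prod.fst_add, Prod.snd_add, Prod.fst_zero, Prod.snd_zero,
    nsmul_eq_mul, mul_one, add_zero, zero_add] at hs1 hs2
  have hp1' : (A.card + C.card) % 2 = 0 := by
    have : ((A.card + C.card : ℕ) : ZMod 2) = 0 := by push_cast; exact hs1
    rw [ZMod.natCast_eq_zero_iff] at this
    omega
  have hp2' : (B.card + C.card) % 2 = 0 := by
    have : ((B.card + C.card : ℕ) : ZMod 2) = 0 := by push_cast; exact hs2
    rw [ZMod.natCast_eq_zero_iff] at this
    omega
  have hult : ∀ x y : ZMod 2 × ZMod 2 × Gp, min (vP x) (vP y) ≤ vP (x + y) := by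
    intro x y
    obtain ⟨a, -, ha⟩ := hf x.2.2
    obtain ⟨b, -, hb⟩ := hf y.2.2
    obtain ⟨c, -, hc⟩ := hf (x.2.2 + y.2.2)
    have h1 : c ≤ max a b := by
      have : p ^ c ∣ p ^ max a b := by
        rw [← hc]
        apply addOrderOf_dvd_of_nsmul_eq_zero
        rw [smul_add, addOrderOf_dvd_iff_nsmul_eq_zero.1 (ha ▸ pow_dvd_pow p (le_max_left a b)),
          addOrderOf_dvd_iff_nsmul_eq_zero.1 (hb ▸ pow_dvd_pow p (le_max_right a b)), add_zero]
      exact (Nat.pow_dvd_pow_iff_le_right hp.one_lt).1 this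
    simp only [vP, Prod.snd_add, ha, hb, hc]
    push_cast
    rcases le_max_iff.1 h1 with h | h
    · apply (min_le_left _ _).trans
      exact one_div_le_one_div_of_le (pow_pos hppos _) (pow_le_pow_right₀ hp1 h)
    · apply (min_le_right _ _).trans
      exact one_div_le_one_div_of_le (pow_pos hppos _) (pow_le_pow_right₀ hp1 h)
  have main := combi (prTwo Gp) vP (by decide) hult (1 / p ^ n) (by positivity)
    (by rw [div_le_one (by positivity)]; exact one_le_pow₀ hp1)
    (fun g => by
      obtain ⟨a, ha, h⟩ := hf g.2.2
      simp only [vP, h]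
      push_cast
      exact one_div_le_one_div_of_le (pow_pos hppos _) (pow_le_pow_right₀ hp1 ha))
    (fun g => by
      obtain ⟨a, ha, h⟩ := hf g.2.2
      simp only [vP, h]
      push_cast
      rw [div_le_one (by positivity)]; exact one_le_pow₀ hp1)
    Kp hK (1, 0) (0, 1) (1, 1) (by decide) A B C hA hB hC (by omega) (by omega) R hR hS
  rw [crossNum_add, crossNum_add, crossNum_add, crossNum_zero_class R hR,
    crossNum_ne_class ho A (fun a ha => by rw [hA a ha]; decide),
    crossNum_ne_class ho B (fun a ha => by rw [hB a ha]; decide),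
    crossNum_ne_class ho C (fun a ha => by rw [hC a ha]; decide)]
  have e3 : 1 / (2 * p ^ n : ℚ) = (1 / p ^ n) / 2 := by field_simp
  rw [e3]
  linarith

theorem le_add_split {α : Type*} {T A B : Multiset α} (h : T ≤ A + B) :
    ∃ T₁ T₂, T₁ ≤ A ∧ T₂ ≤ B ∧ T = T₁ + T₂ := by
  classical
  refine ⟨T ∩ A, T - A, Multiset.inter_le_right, ?_, ?_⟩
  · rwa [tsub_le_iff_left]
  · rw [add_comm]; exact (Multiset.sub_add_inter _ _).symm

theorem le_sum_replicate {α ι : Type*} (t : Finset ι) (f : ι → α) (q : ι → ℕ) (T : Multiset α)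
    (h : T ≤ ∑ i ∈ t, Multiset.replicate (q i) (f i)) :
    ∃ m : ι → ℕ, (∀ i ∈ t, m i ≤ q i) ∧ T = ∑ i ∈ t, Multiset.replicate (m i) (f i) := by
  classical
  induction t using Finset.induction_on generalizing T with
  | empty => exact ⟨0, by simp, by simpa using h⟩
  | insert a t ha ih =>
    rw [Finset.sum_insert ha] at h
    obtain ⟨T₁, T₂, h₁, h₂, rfl⟩ := le_add_split h
    obtain ⟨j, hj, rfl⟩ := Multiset.le_replicate_iff.1 h₁
    obtain ⟨m, hm, rfl⟩ := ih T₂ h₂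
    refine ⟨Function.update m a j, ?_, ?_⟩
    · intro i hi
      rcases Finset.mem_insert.1 hi with h | hi'
      · subst h
        simpa using hj
      · have hia : i ≠ a := fun h => ha (h ▸ hi')
        rw [Function.update_of_ne hia]
        exact hm i hi'
    · rw [Finset.sum_insert ha, Function.update_self]
      congr 1
      apply Finset.sum_congr rfl
      intro i hi
      rw [Function.update_of_ne (by rintro rfl; exact ha hi)]

theorem mzs_of_zsf {G : Type*} [AddCommGroup G] (g : G) (S : Multiset G) (hS : IsZeroSumFree S)
    (hs : g + S.sum = 0) : IsMinZeroSum (g ::ₘ S) := by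
  refine ⟨by simp, by simpa using hs, ?_⟩
  intro T hT hT0 hTs
  by_cases hg : g ∈ T
  · obtain ⟨T', rfl⟩ := Multiset.exists_cons_of_mem hg
    have h1 : T' < S := Multiset.cons_lt_cons_iff.1 hT
    obtain ⟨V, rfl⟩ := Multiset.le_iff_exists_add.1 h1.le
    refine hS V (Multiset.le_add_left _ _) (by rintro rfl; simp at h1) ?_
    simp only [Multiset.sum_cons, Multiset.sum_add] at hTs hs
    rw [← add_assoc, hTs, zero_add] at hs
    exact hs
  · exact hS T ((Multiset.le_cons_of_notMem hg).1 hT.le) hT0 hTs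

theorem lower (hp : p.Prime) (hodd : Odd p) [Finite Gp] {k : Fin s → ℕ}
    (e : Gp ≃+ ∀ i, ZMod (p ^ k i)) (n : ℕ) (hn : AddMonoid.exponent Gp = p ^ n) :
    ∃ S : Multiset (ZMod 2 × ZMod 2 × Gp), IsMinZeroSum S ∧
    crossNum S = 1 / (2 * p ^ n : ℚ) + (1 + ∑ i, ((p ^ k i : ℚ) - 1) / (p ^ k i : ℚ)) := by
  have ho : ∀ g : Gp, Odd (addOrderOf g) := fun g => by
    obtain ⟨a, -, h⟩ := (Nat.dvd_prime_pow hp).1 (hn ▸ AddMonoid.addOrder_dvd_exponent g)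
    rw [h]; exact hodd.pow
  have hsr : ∀ m : Fin s → ℕ, (∑ i, Multiset.replicate (m i) (incP Gp (stdB e i))).sum =
      (0, 0, ∑ i, m i • stdB e i) := by
    intro m
    have h0 : (∑ i, Multiset.replicate (m i) (incP Gp (stdB e i))).sum =
        incP Gp (∑ i, m i • stdB e i) := by
      rw [map_sum]
      have := map_sum (Multiset.sumAddMonoidHom : Multiset (ZMod 2 × ZMod 2 × Gp) →+ _)
        (fun i => Multiset.replicate (m i) (incP Gp (stdB e i))) Finset.univ
      refine this.trans (Finset.sum_congr rfl fun i _ => ?_)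
      rw [_root_.map_nsmul]
      exact Multiset.sum_replicate _ _
    exact h0
  refine ⟨((1, 1, ∑ i, stdB e i) : ZMod 2 × ZMod 2 × Gp) ::ₘ ({(1, 0, 0)} + ({(0, 1, 0)} +
    ∑ i, Multiset.replicate (p ^ k i - 1) (incP Gp (stdB e i)))), ?_, ?_⟩
  · apply mzs_of_zsf
    · intro T hT hT0 hTs
      obtain ⟨T₁, T', h₁, h', rfl⟩ := le_add_split hT
      obtain ⟨T₂, T₃, h₂, h₃, rfl⟩ := le_add_split h'
      obtain ⟨m, hm, rfl⟩ := le_sum_replicate _ _ _ _ h₃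
      rw [Multiset.sum_add, Multiset.sum_add, hsr] at hTs
      have hm0 : ∑ i, m i • stdB e i = 0 → ∀ i, m i = 0 := by
        intro h i
        have h1 := stdB_apply e m i
        rw [h, _root_.map_zero, Pi.zero_apply, eq_comm, ZMod.natCast_eq_zero_iff] at h1
        apply Nat.eq_zero_of_dvd_of_lt h1
        have := hm i (by simp)
        have := pow_pos hp.pos (k i)
        omega
      rcases Multiset.le_singleton.1 h₁ with rfl | rfl <;>
        rcases Multiset.le_singleton.1 h₂ with rfl | rfl
      · simp only [Multiset.sum_zero, zero_add, Prod.mk_eq_zero, true_and] at hTs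
        apply hT0
        simp [hm0 hTs]
      all_goals
        simp at hTs
    · rw [Multiset.sum_add, Multiset.sum_add, hsr]
      have h0 : ∑ i, stdB e i + ∑ i, (p ^ k i - 1) • stdB e i = 0 := by
        rw [← Finset.sum_add_distrib]
        apply Finset.sum_eq_zero
        intro i _
        rw [← succ_nsmul', Nat.sub_add_cancel (Nat.one_le_pow _ _ hp.pos), ← stdB_order e i]
        exact addOrderOf_nsmul_eq_zero _
      simp only [Multiset.sum_singleton, Prod.mk_add_mk, zero_add, add_zero, h0]
      rfl
  · have hc : ∀ x y : ZMod 2, (x, y) ≠ 0 → ∀ g : Gp,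
        addOrderOf ((x, y, g) : ZMod 2 × ZMod 2 × Gp) = 2 * addOrderOf g := fun x y h g =>
      order_ne (x, y, g) h (ho g)
    have hcs : crossNum (∑ i, Multiset.replicate (p ^ k i - 1) (incP Gp (stdB e i))) =
        ∑ i, ((p ^ k i : ℚ) - 1) / (p ^ k i : ℚ) := by
      have h1 : ∀ t : Finset (Fin s),
          crossNum (∑ i ∈ t, Multiset.replicate (p ^ k i - 1) (incP Gp (stdB e i))) =
          ∑ i ∈ t, ((p ^ k i : ℚ) - 1) / (p ^ k i : ℚ) := by
        classical
        intro t
        induction t using Finset.induction_on with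
        | empty => simp [crossNum]
        | insert a t ha ih =>
          rw [Finset.sum_insert ha, Finset.sum_insert ha, crossNum_add, ih]
          congr 1
          have h2 : addOrderOf (incP Gp (stdB e a)) = p ^ k a := by
            rw [order_zero _ rfl, ← stdB_order e a]
            rfl
          simp only [crossNum, Multiset.map_replicate, Multiset.sum_replicate, h2, nsmul_eq_mul]
          rw [Nat.cast_sub (Nat.one_le_pow _ _ hp.pos)]
          push_cast
          ring
      exact h1 _
    rw [crossNum_cons, crossNum_add, crossNum_add, hcs, hc 1 1 (by decide), stdB_sum_order, hn]
    simp only [crossNum, Multiset.map_singleton, Multiset.sum_singleton]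
    rw [hc 1 0 (by decide), hc 0 1 (by decide)]
    simp only [addOrderOf_zero]
    push_cast
    ring

end Final

theorem stmt11 (p : ℕ) (hp : p.Prime) (hodd : Odd p)
    (Gp : Type*) [AddCommGroup Gp] [Fintype Gp]
    (hGp : ∃ m : ℕ, Fintype.card Gp = p ^ m)
    (s : ℕ) (k : Fin s → ℕ) (hk : ∀ i, 1 ≤ k i)
    (e : Gp ≃+ ∀ i, ZMod (p ^ k i)) :
    IsGreatest (WSet (ZMod 2 × ZMod 2 × Gp))
      (1 / (AddMonoid.exponent (ZMod 2 × ZMod 2 × Gp) : ℚ) +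
        ((1 : ℚ) / 2 + (1 : ℚ) / 2 +
          ∑ i, ((p ^ k i : ℚ) - 1) / (p ^ k i : ℚ))) := by
  obtain ⟨m, hm⟩ := hGp
  obtain ⟨n, -, hn⟩ : ∃ n ≤ m, AddMonoid.exponent Gp = p ^ n :=
    (Nat.dvd_prime_pow hp).1 (hm ▸ AddGroup.exponent_dvd_card)
  have hexp : AddMonoid.exponent (ZMod 2 × ZMod 2 × Gp) = 2 * p ^ n := by
    rw [AddMonoid.exponent_prod, AddMonoid.exponent_prod, ZMod.exponent, hn]
    have hl : Nat.lcm 2 (p ^ n) = 2 * p ^ n :=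
      Nat.Coprime.lcm_eq_mul (Nat.coprime_two_left.2 hodd.pow)
    change Nat.lcm 2 (Nat.lcm 2 (p ^ n)) = _
    rw [hl]
    exact Nat.lcm_eq_right (Dvd.intro _ rfl)
  have hval : (1 / (AddMonoid.exponent (ZMod 2 × ZMod 2 × Gp) : ℚ) +
        ((1 : ℚ) / 2 + (1 : ℚ) / 2 + ∑ i, ((p ^ k i : ℚ) - 1) / (p ^ k i : ℚ))) =
      1 / (2 * p ^ n : ℚ) + (1 + ∑ i, ((p ^ k i : ℚ) - 1) / (p ^ k i : ℚ)) := by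
    rw [hexp]
    push_cast
    norm_num
  rw [hval]
  refine ⟨lower hp hodd e n hn, ?_⟩
  rintro _ ⟨S, hS, rfl⟩
  exact upper hp hodd e n hn S hS
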